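/- For every δ ∈ (0,π) there exists a constant C = C(δ) > 0 with the following property. Let E be a real inner product space, let Q, P, S ∈ E be unit vectors, and set x := arccos⟨Q,S⟩ and y := arccos⟨Q,P⟩; assume x, y ∈ (0, π−δ]. For η, η' ∈ [0,1] let S_η := γ_{S,Q}(η) and P_{η'} := γ_{P,Q}(η'). Then d_S(P_{η'}, S_η)² ≤ (sin²((1−η)x)/sin² x)·(d_S(P,S)² − (x−y)²) + ((1−η)(x−y) + (η'−η)x)² + C·(d_S(P,S) + |x−y| + |η−η'|)³. -/

import Mathlib

open scoped RealInnerProductSpace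

/-- The spherical geodesic interpolation point `γ_{A,B}(t)` between unit vectors `A` and `B`:
`γ_{A,B}(t) = (sin((1−t)θ)·A + sin(tθ)·B)/sin θ` where `θ = arccos⟨A,B⟩`. -/
noncomputable def sphGeo {E : Type*} [NormedAddCommGroup E] [InnerProductSpace ℝ E]
    (A B : E) (t : ℝ) : E :=
  (Real.sin (Real.arccos ⟪A, B⟫))⁻¹ •
    (Real.sin ((1 - t) * Real.arccos ⟪A, B⟫) • A + Real.sin (t * Real.arccos ⟪A, B⟫) • B)

/-!
Put `x = d(Q, S)`, `y = d(Q, P)`, `D = d(P, S)`, `s = 1 - η`, `t = 1 - η'`, `q = sin (s x) / sin x`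
and `p = sin (t y) / sin y`. Expanding the inner product of the interpolation points, one finds that
their distance `d` satisfies `cos d = cos (s x - t y) - p q (cos (x - y) - cos D)`.
Now replace `p` by `q`, `cos (x - y) - cos D` by `(D² - (x - y)²) / 2`, `s x - t y` by
`s (x - y) + (s - t) x` and `2 (1 - cos d)` by `d²`. Each replacement costs `O(ε³)` with
`ε = D + |x - y| + |η - η'|`, provided `ε ≤ 1`; for `ε ≥ 1` the estimate holds because `d ≤ π`.
The first replacement is where `x` and `y` have to stay away from `π`: `sinc` is Lipschitz, and
hence so is `sin (s x) / sin x = s sinc (s x) / sinc x` as long as `sinc` is bounded below.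
-/

section SineRatio

open Real

/-- The ratio `sin (s x) / sin x`: the coefficient of `A` in `sphGeo A B (1 - s)`, where `x` is the
spherical distance from `A` to `B`. -/
noncomputable def sinRatio (s x : ℝ) : ℝ :=
  sin (s * x) / sin x

lemma mul_sinc (x : ℝ) : x * sinc x = sin x := by
  rcases eq_or_ne x 0 with rfl | hx
  · simp
  · rw [sinc_of_ne_zero hx, mul_div_cancel₀ _ hx]

lemma sinc_pos_of_nonneg_of_lt_pi {x : ℝ} (hx : 0 ≤ x) (hxπ : x < π) : 0 < sinc x := by
  rcases hx.eq_or_lt with rfl | hx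
  · simp
  · rw [sinc_of_ne_zero hx.ne']
    exact div_pos (sin_pos_of_pos_of_lt_pi hx hxπ) hx

lemma exists_pos_forall_le_sinc {r : ℝ} (hr : r < π) :
    ∃ m, 0 < m ∧ ∀ x ∈ Set.Icc 0 r, m ≤ sinc x :=
  isCompact_Icc.exists_forall_le' continuous_sinc.continuousOn fun _ hx =>
    sinc_pos_of_nonneg_of_lt_pi hx.1 (hx.2.trans_lt hr)

lemma sinc_eq_integral_cos (x : ℝ) : sinc x = ∫ u in (0 : ℝ)..1, cos (x * u) := by
  rcases eq_or_ne x 0 with rfl | hx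
  · simp
  · rw [intervalIntegral.integral_comp_mul_left _ hx, integral_cos, sinc_of_ne_zero hx]
    simp [div_eq_inv_mul]

lemma abs_sinc_sub_sinc_le (x y : ℝ) : |sinc x - sinc y| ≤ |x - y| := by
  have hcont (z : ℝ) : Continuous fun u : ℝ => cos (z * u) := by fun_prop
  rw [sinc_eq_integral_cos, sinc_eq_integral_cos, ← intervalIntegral.integral_sub
    ((hcont x).intervalIntegrable 0 1) ((hcont y).intervalIntegrable 0 1), ← norm_eq_abs]
  refine (intervalIntegral.norm_integral_le_of_norm_le_const (C := |x - y|)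
    fun u hu => ?_).trans_eq (by simp)
  rw [Set.uIoc_of_le zero_le_one] at hu
  calc ‖cos (x * u) - cos (y * u)‖
      ≤ |x * u - y * u| := by simpa [dist_eq] using lipschitzWith_cos.dist_le_mul (x * u) (y * u)
    _ = |x - y| * u := by rw [← sub_mul, abs_mul, abs_of_pos hu.1]
    _ ≤ |x - y| := mul_le_of_le_one_right (abs_nonneg _) hu.2

lemma abs_mul_sinc_mul_sub_le (s t y : ℝ) :
    |t * sinc (t * y) - s * sinc (s * y)| ≤ |t - s| := by
  rcases eq_or_ne y 0 with rfl | hy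
  · simp
  · refine le_of_mul_le_mul_right ?_ (abs_pos.2 hy)
    calc |t * sinc (t * y) - s * sinc (s * y)| * |y|
        = |sin (t * y) - sin (s * y)| := by
          rw [← abs_mul, ← mul_sinc (t * y), ← mul_sinc (s * y)]
          ring_nf
      _ ≤ |t * y - s * y| := by
          simpa [dist_eq] using lipschitzWith_sin.dist_le_mul (t * y) (s * y)
      _ = |t - s| * |y| := by rw [← sub_mul, abs_mul]

lemma sinRatio_eq_mul_sinc_div_sinc (s : ℝ) {x : ℝ} (hx : x ≠ 0) :
    sinRatio s x = s * sinc (s * x) / sinc x := by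
  rw [sinRatio, ← mul_sinc, ← mul_sinc, mul_right_comm, mul_comm x, mul_div_mul_right _ _ hx]

variable {m x y : ℝ} (hm : 0 < m) (hx : x ≠ 0) (hmx : m ≤ sinc x)

include hm hx hmx

lemma abs_sinRatio_le (s : ℝ) : |sinRatio s x| ≤ |s| / m := by
  rw [sinRatio_eq_mul_sinc_div_sinc s hx, abs_div, abs_mul, abs_of_pos (hm.trans_le hmx)]
  exact div_le_div₀ (abs_nonneg s)
    (mul_le_of_le_one_right (abs_nonneg s) (abs_sinc_le_one _)) hm hmx

lemma abs_sinRatio_sub_sinRatio_le (hy : y ≠ 0) (hmy : m ≤ sinc y) (s t : ℝ) :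
    |sinRatio t y - sinRatio s x| ≤ |t - s| / m + (s ^ 2 / m + |s| / m ^ 2) * |x - y| := by
  have hX : 0 < sinc x := hm.trans_le hmx
  have hY : 0 < sinc y := hm.trans_le hmy
  have hsplit : sinRatio t y - sinRatio s x
      = (t * sinc (t * y) - s * sinc (s * y)) / sinc y
        + s * (sinc (s * y) - sinc (s * x)) / sinc y
        + s * sinc (s * x) * (sinc x - sinc y) / (sinc x * sinc y) := by
    rw [sinRatio_eq_mul_sinc_div_sinc t hy, sinRatio_eq_mul_sinc_div_sinc s hx]
    field_simp
    ring
  have hparam : |(t * sinc (t * y) - s * sinc (s * y)) / sinc y| ≤ |t - s| / m := by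
    rw [abs_div, abs_of_pos hY]
    exact div_le_div₀ (abs_nonneg _) (abs_mul_sinc_mul_sub_le s t y) hm hmy
  have hnum : |s * (sinc (s * y) - sinc (s * x)) / sinc y| ≤ s ^ 2 * |x - y| / m := by
    rw [abs_div, abs_of_pos hY, abs_mul]
    refine div_le_div₀ (by positivity) ?_ hm hmy
    calc |s| * |sinc (s * y) - sinc (s * x)|
        ≤ |s| * |s * y - s * x| :=
          mul_le_mul_of_nonneg_left (abs_sinc_sub_sinc_le _ _) (abs_nonneg s)
      _ = s ^ 2 * |x - y| := by
          rw [← mul_sub, abs_mul, abs_sub_comm y x, ← mul_assoc, abs_mul_abs_self, sq]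
  have hden : |s * sinc (s * x) * (sinc x - sinc y) / (sinc x * sinc y)|
      ≤ |s| * |x - y| / m ^ 2 := by
    rw [abs_div, abs_of_pos (mul_pos hX hY), abs_mul, abs_mul, sq]
    refine div_le_div₀ (by positivity) ?_ (by positivity)
      (mul_le_mul hmx hmy hm.le hX.le)
    exact mul_le_mul (mul_le_of_le_one_right (abs_nonneg s) (abs_sinc_le_one _))
      (abs_sinc_sub_sinc_le x y) (abs_nonneg _) (abs_nonneg s)
  calc |sinRatio t y - sinRatio s x|
      ≤ |t - s| / m + s ^ 2 * |x - y| / m + |s| * |x - y| / m ^ 2 := by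
        rw [hsplit]
        exact (abs_add_three _ _ _).trans (by gcongr)
    _ = |t - s| / m + (s ^ 2 / m + |s| / m ^ 2) * |x - y| := by ring

end SineRatio

section Comparison

open Real

lemma two_mul_cos_sub_cos_le {w D : ℝ} (h : |w| ≤ D) :
    2 * (cos w - cos D) ≤ D ^ 2 - w ^ 2 := by
  obtain ⟨hw, hw'⟩ := abs_le.1 h
  have hsum : |sin ((w + D) / 2)| ≤ (w + D) / 2 :=
    abs_sin_le_abs.trans_eq (abs_of_nonneg (by linarith))
  have hdiff : |sin ((w - D) / 2)| ≤ (D - w) / 2 :=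
    abs_sin_le_abs.trans_eq (by rw [abs_of_nonpos (by linarith)]; ring)
  calc 2 * (cos w - cos D)
      = 4 * -(sin ((w + D) / 2) * sin ((w - D) / 2)) := by rw [cos_sub_cos]; ring
    _ ≤ 4 * |sin ((w + D) / 2) * sin ((w - D) / 2)| := by gcongr; exact neg_le_abs _
    _ ≤ 4 * ((w + D) / 2 * ((D - w) / 2)) := by
        rw [abs_mul]
        gcongr
        linarith
    _ = D ^ 2 - w ^ 2 := by ring

lemma sq_le_two_mul_one_sub_cos_add_pow_four (d : ℝ) : d ^ 2 ≤ 2 * (1 - cos d) + d ^ 4 := by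
  rcases le_total |d| 1 with h | h
  · have hcos := (abs_le.1 (cos_bound h)).2
    rw [Even.pow_abs (by decide)] at hcos
    linarith [Even.pow_nonneg (by decide : Even 4) d]
  · have hd : 1 ≤ d ^ 2 := (one_le_sq_iff_one_le_abs d).2 h
    nlinarith [cos_le_one d]

lemma sq_le_six_mul_one_sub_cos {d : ℝ} (hd : |d| ≤ π) : d ^ 2 ≤ 6 * (1 - cos d) := by
  have hπ : 1 / 6 ≤ 2 / π ^ 2 := by
    rw [div_le_div_iff₀ (by norm_num) (by positivity)]
    nlinarith [pi_lt_d2, pi_pos]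
  nlinarith [cos_le_one_sub_mul_cos_sq hd, mul_le_mul_of_nonneg_right hπ (sq_nonneg d)]

lemma sq_le_of_two_mul_one_sub_cos_le {d e A B K : ℝ} (hd : |d| ≤ π) (he : 0 ≤ e) (he1 : e ≤ 1)
    (hB : 0 ≤ B) (hcos : 2 * (1 - cos d) ≤ A + B * e ^ 3) (hA : A ≤ K * e ^ 2) :
    d ^ 2 ≤ A + (B + 9 * (K + B) ^ 2) * e ^ 3 := by
  have he32 : e ^ 3 ≤ e ^ 2 := pow_le_pow_of_le_one he he1 (by norm_num)
  have he43 : e ^ 4 ≤ e ^ 3 := pow_le_pow_of_le_one he he1 (by norm_num)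
  have hd2 : d ^ 2 ≤ 3 * ((K + B) * e ^ 2) := by
    linarith [sq_le_six_mul_one_sub_cos hd, mul_le_mul_of_nonneg_left he32 hB]
  have hd4 : d ^ 4 ≤ 9 * (K + B) ^ 2 * e ^ 3 := by
    calc d ^ 4 = (d ^ 2) ^ 2 := by ring
      _ ≤ (3 * ((K + B) * e ^ 2)) ^ 2 := by gcongr
      _ = 9 * (K + B) ^ 2 * e ^ 4 := by ring
      _ ≤ 9 * (K + B) ^ 2 * e ^ 3 := by gcongr
  linarith [sq_le_two_mul_one_sub_cos_add_pow_four d]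

lemma mul_mul_cos_sub_cos_le {M L p q w D e : ℝ} (hw : |w| ≤ D) (hD : D ≤ π) (hDe : D ≤ e)
    (hq : |q| ≤ M) (hpq : |p - q| ≤ L * e) :
    p * q * (2 * (cos w - cos D)) ≤ q ^ 2 * (D ^ 2 - w ^ 2) + M * L * e ^ 3 := by
  have hD0 : 0 ≤ D := (abs_nonneg w).trans hw
  have hM : 0 ≤ M := (abs_nonneg q).trans hq
  have hgap : 0 ≤ 2 * (cos w - cos D) := by
    rw [← cos_abs w]
    linarith [cos_le_cos_of_nonneg_of_le_pi (abs_nonneg w) hD hw]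
  have hgap_le := two_mul_cos_sub_cos_le hw
  have hgap_sq : 2 * (cos w - cos D) ≤ e ^ 2 := by nlinarith [sq_nonneg w]
  have hcross : (p - q) * q ≤ L * e * M :=
    calc (p - q) * q ≤ |p - q| * |q| := (le_abs_self _).trans_eq (abs_mul _ _)
      _ ≤ L * e * M := by gcongr; exact (abs_nonneg _).trans hpq
  calc p * q * (2 * (cos w - cos D))
      = q ^ 2 * (2 * (cos w - cos D)) + (p - q) * q * (2 * (cos w - cos D)) := by ring
    _ ≤ q ^ 2 * (D ^ 2 - w ^ 2) + L * e * M * e ^ 2 := by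
        gcongr
        exact mul_nonneg ((abs_nonneg _).trans hpq) hM
    _ = q ^ 2 * (D ^ 2 - w ^ 2) + M * L * e ^ 3 := by ring

lemma sub_sq_le_sq_add_cube {V v z e : ℝ} (he : 0 ≤ e) (he1 : e ≤ 1) (hv : |v| ≤ V * e)
    (hz : |z| ≤ e ^ 2) : (v - z) ^ 2 ≤ v ^ 2 + (2 * V + 1) * e ^ 3 := by
  have hvz : -(v * z) ≤ V * e * e ^ 2 :=
    (neg_le_abs _).trans <| (abs_mul v z).trans_le <|
      mul_le_mul hv hz (abs_nonneg z) ((abs_nonneg v).trans hv)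
  have hz2 : z ^ 2 ≤ e ^ 3 :=
    calc z ^ 2 ≤ (e ^ 2) ^ 2 := sq_le_sq' (abs_le.1 hz).1 (abs_le.1 hz).2
      _ = e ^ 4 := by ring
      _ ≤ e ^ 3 := pow_le_pow_of_le_one he he1 (by norm_num)
  linear_combination 2 * hvz + hz2

lemma sq_mul_sub_sq_add_sq_le {M V q v w D e : ℝ} (hD : 0 ≤ D) (hDe : D ≤ e) (hq : |q| ≤ M)
    (hv : |v| ≤ V * e) : q ^ 2 * (D ^ 2 - w ^ 2) + v ^ 2 ≤ (M ^ 2 + V ^ 2) * e ^ 2 :=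
  calc q ^ 2 * (D ^ 2 - w ^ 2) + v ^ 2
      ≤ |q| ^ 2 * D ^ 2 + |v| ^ 2 := by
        rw [sq_abs, sq_abs]
        gcongr
        exact sub_le_self _ (sq_nonneg w)
    _ ≤ M ^ 2 * e ^ 2 + (V * e) ^ 2 := by gcongr
    _ = (M ^ 2 + V ^ 2) * e ^ 2 := by ring

lemma exists_const_sq_le_of_cos_eq_of_le_one {M L R : ℝ} (hM : 0 ≤ M) (hL : 0 ≤ L)
    (hR : 0 ≤ R) :
    ∃ C : ℝ, 0 ≤ C ∧ ∀ {s t x y p q D d e : ℝ}, |s| ≤ R → |x| ≤ π → D ≤ π → |x - y| ≤ D →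
      |d| ≤ π → |q| ≤ M → |p - q| ≤ L * e →
      cos d = cos (s * x - t * y) - p * q * (cos (x - y) - cos D) →
      D + |x - y| + |t - s| = e → e ≤ 1 →
      d ^ 2 ≤ q ^ 2 * (D ^ 2 - (x - y) ^ 2) + (s * (x - y) + (s - t) * x) ^ 2 + C * e ^ 3 := by
  set B := M * L + (2 * (R + π) + 1)
  have hB0 : 0 ≤ B := by positivity
  refine ⟨B + 9 * (M ^ 2 + (R + π) ^ 2 + B) ^ 2, by positivity, ?_⟩
  intro s t x y p q D d e hs hx hD hxy hd hq hpq hcos he he1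
  have hw0 := abs_nonneg (x - y)
  have hst0 := abs_nonneg (t - s)
  have he0 : 0 ≤ e := by linarith
  have hDe : D ≤ e := by linarith
  have hwe : |x - y| ≤ e := hxy.trans hDe
  have hst : |s - t| ≤ e := by rw [abs_sub_comm]; linarith
  have hv : |s * (x - y) + (s - t) * x| ≤ (R + π) * e :=
    calc |s * (x - y) + (s - t) * x| ≤ |s| * |x - y| + |s - t| * |x| := by
          simpa only [abs_mul] using abs_add_le (s * (x - y)) ((s - t) * x)
      _ ≤ R * e + e * π := by gcongr
      _ = (R + π) * e := by ring
  have hz : |(s - t) * (x - y)| ≤ e ^ 2 := by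
    rw [abs_mul, sq]
    gcongr
  have hcos' : 2 * (1 - cos d) ≤ q ^ 2 * (D ^ 2 - (x - y) ^ 2) + (s * (x - y) + (s - t) * x) ^ 2
      + B * e ^ 3 := by
    have hu : s * x - t * y = s * (x - y) + (s - t) * x - (s - t) * (x - y) := by ring
    have hquad := one_sub_sq_div_two_le_cos (x := s * x - t * y)
    rw [hu] at hquad hcos
    linarith [sub_sq_le_sq_add_cube he0 he1 hv hz,
      mul_mul_cos_sub_cos_le hxy hD hDe hq hpq]
  exact sq_le_of_two_mul_one_sub_cos_le hd he0 he1 hB0 hcos'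
    (sq_mul_sub_sq_add_sq_le ((abs_nonneg _).trans hxy) hDe hq hv)

lemma exists_const_sq_le_of_cos_eq {m R : ℝ} (hm : 0 < m) (hR : 0 ≤ R) :
    ∃ C : ℝ, 0 < C ∧ ∀ {s t x y D d : ℝ}, |s| ≤ R → x ≠ 0 → y ≠ 0 → |x| ≤ π →
      m ≤ sinc x → m ≤ sinc y → D ≤ π → |x - y| ≤ D → |d| ≤ π →
      cos d = cos (s * x - t * y) - sinRatio t y * sinRatio s x * (cos (x - y) - cos D) →
      d ^ 2 ≤ sinRatio s x ^ 2 * (D ^ 2 - (x - y) ^ 2) + (s * (x - y) + (s - t) * x) ^ 2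
        + C * (D + |x - y| + |t - s|) ^ 3 := by
  set L := 1 / m + (R ^ 2 / m + R / m ^ 2)
  have hL0 : 0 ≤ L := by positivity
  obtain ⟨C, hC, hsmall⟩ := exists_const_sq_le_of_cos_eq_of_le_one (div_nonneg hR hm.le) hL0 hR
  refine ⟨C + 10, by positivity, ?_⟩
  intro s t x y D d hs hx hy hxπ hmx hmy hD hxy hd hcos
  set e := D + |x - y| + |t - s| with he
  have hD0 : 0 ≤ D := (abs_nonneg _).trans hxy
  have he0 : 0 ≤ e := by positivity
  rcases le_total e 1 with he1 | he1
  · have hq : |sinRatio s x| ≤ R / m :=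
      (abs_sinRatio_le hm hx hmx s).trans (by gcongr)
    have hpq : |sinRatio t y - sinRatio s x| ≤ L * e :=
      calc |sinRatio t y - sinRatio s x|
          ≤ |t - s| / m + (s ^ 2 / m + |s| / m ^ 2) * |x - y| :=
            abs_sinRatio_sub_sinRatio_le hm hx hmx hy hmy s t
        _ ≤ e / m + (R ^ 2 / m + R / m ^ 2) * e := by
            rw [← sq_abs s]
            gcongr <;> linarith [abs_nonneg (x - y), abs_nonneg (t - s)]
        _ = L * e := by ring
    have hd2 := hsmall hs hxπ hD hxy hd hq hpq hcos he.symm he1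
    linarith [pow_nonneg he0 3]
  · have hd10 : d ^ 2 ≤ 10 := by
      nlinarith [sq_abs d, abs_nonneg d, pi_lt_d2, pi_pos]
    have hmain : 0 ≤ sinRatio s x ^ 2 * (D ^ 2 - (x - y) ^ 2) :=
      mul_nonneg (sq_nonneg _) (sub_nonneg.2 (sq_le_sq' (abs_le.1 hxy).1 (abs_le.1 hxy).2))
    have herror : 10 ≤ (C + 10) * e ^ 3 := by
      nlinarith [one_le_pow₀ he1 (n := 3)]
    linarith [sq_nonneg (s * (x - y) + (s - t) * x)]

end Comparison

section SphericalGeodesic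

open Real

variable {E : Type*} [NormedAddCommGroup E] [InnerProductSpace ℝ E] {A B P Q S : E}

lemma arccos_inner_eq_angle (hA : ‖A‖ = 1) (hB : ‖B‖ = 1) :
    arccos ⟪A, B⟫ = InnerProductGeometry.angle A B := by
  simp [InnerProductGeometry.angle, hA, hB]

lemma cos_arccos_inner (hA : ‖A‖ = 1) (hB : ‖B‖ = 1) : cos (arccos ⟪A, B⟫) = ⟪A, B⟫ := by
  rw [arccos_inner_eq_angle hA hB, InnerProductGeometry.inner_eq_cos_angle_of_norm_eq_one hA hB]

lemma abs_arccos_inner_le_pi (A B : E) : |arccos ⟪A, B⟫| ≤ π :=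
  (abs_of_nonneg (arccos_nonneg _)).trans_le (arccos_le_pi _)

lemma abs_arccos_inner_sub_arccos_inner_le (hQ : ‖Q‖ = 1) (hP : ‖P‖ = 1) (hS : ‖S‖ = 1) :
    |arccos ⟪Q, S⟫ - arccos ⟪Q, P⟫| ≤ arccos ⟪P, S⟫ := by
  rw [arccos_inner_eq_angle hQ hS, arccos_inner_eq_angle hQ hP, arccos_inner_eq_angle hP hS,
    abs_sub_le_iff]
  have hviaP := InnerProductGeometry.angle_le_angle_add_angle Q P S
  have hviaS := InnerProductGeometry.angle_le_angle_add_angle Q S P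
  rw [InnerProductGeometry.angle_comm S P] at hviaS
  constructor <;> linarith

lemma sphGeo_eq_sinRatio_smul_add (h : sin (arccos ⟪B, A⟫) ≠ 0) (t : ℝ) :
    sphGeo A B t = sinRatio (1 - t) (arccos ⟪B, A⟫) • A
      + (cos ((1 - t) * arccos ⟪B, A⟫)
        - cos (arccos ⟪B, A⟫) * sinRatio (1 - t) (arccos ⟪B, A⟫)) • B := by
  have ht (θ : ℝ) : sin (t * θ) = sin θ * cos ((1 - t) * θ) - cos θ * sin ((1 - t) * θ) := by
    rw [← sin_sub]
    ring_nf
  rw [sphGeo, sinRatio, real_inner_comm, smul_add, smul_smul, smul_smul, ht]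
  congr 2 <;> field_simp

lemma inner_sphGeo_sphGeo (hQ : ‖Q‖ = 1) (hP : ‖P‖ = 1) (hS : ‖S‖ = 1)
    (hQP : sin (arccos ⟪Q, P⟫) ≠ 0) (hQS : sin (arccos ⟪Q, S⟫) ≠ 0) (a b : ℝ) :
    ⟪sphGeo P Q a, sphGeo S Q b⟫ =
      cos ((1 - b) * arccos ⟪Q, S⟫ - (1 - a) * arccos ⟪Q, P⟫)
        - sinRatio (1 - a) (arccos ⟪Q, P⟫) * sinRatio (1 - b) (arccos ⟪Q, S⟫)
          * (cos (arccos ⟪Q, S⟫ - arccos ⟪Q, P⟫) - cos (arccos ⟪P, S⟫)) := by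
  have hsin {θ : ℝ} (hθ : sin θ ≠ 0) (s : ℝ) : sin (s * θ) = sinRatio s θ * sin θ := by
    rw [sinRatio, div_mul_cancel₀ _ hθ]
  rw [sphGeo_eq_sinRatio_smul_add hQP, sphGeo_eq_sinRatio_smul_add hQS, cos_sub, cos_sub,
    hsin hQP, hsin hQS]
  simp only [inner_add_left, inner_add_right, real_inner_smul_left, real_inner_smul_right,
    real_inner_self_eq_norm_sq, real_inner_comm Q P, hQ, cos_arccos_inner hQ hP,
    cos_arccos_inner hQ hS, cos_arccos_inner hP hS]
  ring

lemma norm_sphGeo (hA : ‖A‖ = 1) (hB : ‖B‖ = 1) (h : sin (arccos ⟪B, A⟫) ≠ 0) (t : ℝ) :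
    ‖sphGeo A B t‖ = 1 := by
  have hself : ⟪sphGeo A B t, sphGeo A B t⟫ = 1 := by
    rw [inner_sphGeo_sphGeo hB hA hA h h]
    simp [hA]
  rwa [real_inner_self_eq_norm_sq, pow_eq_one_iff_of_nonneg (norm_nonneg _) two_ne_zero] at hself

end SphericalGeodesic

theorem spherical_estimate_II_general {δ R : ℝ} (hδ : 0 < δ) (hR : 0 ≤ R) :
    ∃ C : ℝ, 0 < C ∧
      ∀ (E : Type*) [NormedAddCommGroup E] [InnerProductSpace ℝ E]
        (Q P S : E), ‖Q‖ = 1 → ‖P‖ = 1 → ‖S‖ = 1 →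
        Real.arccos ⟪Q, S⟫ ∈ Set.Ioc 0 (Real.pi - δ) →
        Real.arccos ⟪Q, P⟫ ∈ Set.Ioc 0 (Real.pi - δ) →
        ∀ η : ℝ, |1 - η| ≤ R → ∀ η' : ℝ,
        (Real.arccos ⟪sphGeo P Q η', sphGeo S Q η⟫) ^ 2
          ≤ (Real.sin ((1 - η) * Real.arccos ⟪Q, S⟫)) ^ 2 / (Real.sin (Real.arccos ⟪Q, S⟫)) ^ 2
              * ((Real.arccos ⟪P, S⟫) ^ 2 - (Real.arccos ⟪Q, S⟫ - Real.arccos ⟪Q, P⟫) ^ 2)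
            + ((1 - η) * (Real.arccos ⟪Q, S⟫ - Real.arccos ⟪Q, P⟫)
                + (η' - η) * Real.arccos ⟪Q, S⟫) ^ 2
            + C * (Real.arccos ⟪P, S⟫ + |Real.arccos ⟪Q, S⟫ - Real.arccos ⟪Q, P⟫|
                + |η - η'|) ^ 3 := by
  obtain ⟨m, hm, hsinc⟩ := exists_pos_forall_le_sinc (sub_lt_self Real.pi hδ)
  obtain ⟨C, hC, hestimate⟩ := exists_const_sq_le_of_cos_eq hm hR
  refine ⟨C, hC, fun E _ _ Q P S hQ hP hS hx hy η hη η' => ?_⟩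
  have hsin {θ : ℝ} (hθ : θ ∈ Set.Ioc 0 (Real.pi - δ)) : Real.sin θ ≠ 0 :=
    (Real.sin_pos_of_pos_of_lt_pi hθ.1 (by linarith [hθ.2])).ne'
  have hxsin := hsin hx
  have hysin := hsin hy
  have hcos := (cos_arccos_inner (norm_sphGeo hP hQ hysin η') (norm_sphGeo hS hQ hxsin η)).trans
    (inner_sphGeo_sphGeo hQ hP hS hysin hxsin η' η)
  have h := hestimate hη hx.1.ne' hy.1.ne' (abs_arccos_inner_le_pi Q S)
    (hsinc _ ⟨hx.1.le, hx.2⟩) (hsinc _ ⟨hy.1.le, hy.2⟩) (Real.arccos_le_pi _)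
    (abs_arccos_inner_sub_arccos_inner_le hQ hP hS)
    (abs_arccos_inner_le_pi _ _) hcos
  rwa [sinRatio, div_pow, sub_sub_sub_cancel_left, sub_sub_sub_cancel_left] at h

/-- Spherical comparison version of Estimate II for the triangle `QPS` on the
unit sphere of a real inner product space: with `x = arccos⟨Q,S⟫`, `y = arccos⟨Q,P⟫` in
`(0, π−δ]`, `S_η = γ_{S,Q}(η)`, `P_{η'} = γ_{P,Q}(η')`, one has
`d_S(P_{η'},S_η)² ≤ (sin²((1−η)x)/sin²x)(d_S(P,S)² − (x−y)²) + ((1−η)(x−y) + (η'−η)x)²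
+ C(d_S(P,S) + |x−y| + |η−η'|)³`, where `C = C(δ) > 0`. -/
theorem spherical_estimate_II :
    ∀ δ ∈ Set.Ioo (0 : ℝ) Real.pi, ∃ C : ℝ, 0 < C ∧
      ∀ (E : Type*) [NormedAddCommGroup E] [InnerProductSpace ℝ E]
        (Q P S : E), ‖Q‖ = 1 → ‖P‖ = 1 → ‖S‖ = 1 →
        Real.arccos ⟪Q, S⟫ ∈ Set.Ioc 0 (Real.pi - δ) →
        Real.arccos ⟪Q, P⟫ ∈ Set.Ioc 0 (Real.pi - δ) →
        ∀ η ∈ Set.Icc (0 : ℝ) 1, ∀ η' ∈ Set.Icc (0 : ℝ) 1,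
        (Real.arccos ⟪sphGeo P Q η', sphGeo S Q η⟫) ^ 2
          ≤ (Real.sin ((1 - η) * Real.arccos ⟪Q, S⟫)) ^ 2 / (Real.sin (Real.arccos ⟪Q, S⟫)) ^ 2
              * ((Real.arccos ⟪P, S⟫) ^ 2 - (Real.arccos ⟪Q, S⟫ - Real.arccos ⟪Q, P⟫) ^ 2)
            + ((1 - η) * (Real.arccos ⟪Q, S⟫ - Real.arccos ⟪Q, P⟫)
                + (η' - η) * Real.arccos ⟪Q, S⟫) ^ 2
            + C * (Real.arccos ⟪P, S⟫ + |Real.arccos ⟪Q, S⟫ - Real.arccos ⟪Q, P⟫|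
                + |η - η'|) ^ 3 := by
  intro δ hδ
  obtain ⟨C, hC, h⟩ := spherical_estimate_II_general hδ.1 zero_le_one
  exact ⟨C, hC, fun E _ _ Q P S hQ hP hS hx hy η hη η' _ => h E Q P S hQ hP hS hx hy η
    (abs_le.2 ⟨by linarith [hη.2], by linarith [hη.1]⟩) η'⟩
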